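/- For every prime p and automorphism φ of ℤ^d, the group G = ℤ ⋉_φ ℤ^d has a normal subgroup N such that N is residually p and G/N is finite cyclic. -/

import Mathlib

/-- The action of `ℤ` on `ℤ^d` where `1` acts by `φ`. -/
def sdAct (d : ℕ) (φ : (Fin d → ℤ) ≃ₗ[ℤ] (Fin d → ℤ)) :
    Multiplicative ℤ →* MulAut (Multiplicative (Fin d → ℤ)) :=
  zpowersHom _ (AddEquiv.toMultiplicative φ.toAddEquiv)

/-- The mapping torus `ℤ ⋉_φ ℤ^d`. -/
abbrev MapTorus (d : ℕ) (φ : (Fin d → ℤ) ≃ₗ[ℤ] (Fin d → ℤ)) :=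
  Multiplicative (Fin d → ℤ) ⋊[sdAct d φ] Multiplicative ℤ

/-- A group is residually `p` if every nontrivial element is detected by a homomorphism
to a finite `p`-group. -/
def ResiduallyP (p : ℕ) (G : Type*) [Group G] : Prop :=
  ∀ g : G, g ≠ 1 → ∃ (P : Type) (_ : Group P) (_ : Finite P) (f : G →* P),
    IsPGroup p P ∧ f g ≠ 1

lemma aux_pow {R : Type*} [Ring R] (p a : ℕ) (Z : R) :
    ∃ W : R, (1 + (p : R) * Z) ^ (p ^ a) = 1 + ((p ^ (a+1) : ℕ) : R) * W := by
  have h : (p : Polynomial ℤ) ∣ (1 + (p : Polynomial ℤ) * Polynomial.X) - 1 := by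
    simp
  obtain ⟨w, hw⟩ := dvd_sub_pow_of_dvd_sub h a
  refine ⟨Polynomial.aeval Z w, ?_⟩
  have := congrArg (Polynomial.aeval (R := ℤ) Z) hw
  simp only [map_sub, map_pow, map_add, map_one, map_mul, map_natCast, Polynomial.aeval_X,
    one_pow] at this
  rw [sub_eq_iff_eq_add'] at this
  rw [this]; push_cast; rfl

def rhoHom (d : ℕ) (φ : (Fin d → ℤ) ≃ₗ[ℤ] (Fin d → ℤ)) :
    Multiplicative ℤ →* Matrix (Fin d) (Fin d) ℤ :=
  ((LinearMap.toMatrixAlgEquiv' : _ ≃ₐ[ℤ] Matrix (Fin d) (Fin d) ℤ) :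
      ((Fin d → ℤ) →ₗ[ℤ] (Fin d → ℤ)) →* Matrix (Fin d) (Fin d) ℤ).comp
    ((LinearEquiv.automorphismGroup.toLinearMapMonoidHom).comp (zpowersHom _ φ))

def autHom (d : ℕ) : ((Fin d → ℤ) ≃ₗ[ℤ] (Fin d → ℤ)) →*
    MulAut (Multiplicative (Fin d → ℤ)) where
  toFun e := AddEquiv.toMultiplicative e.toAddEquiv
  map_one' := rfl
  map_mul' _ _ := rfl

lemma sdAct_eq (d : ℕ) (φ : (Fin d → ℤ) ≃ₗ[ℤ] (Fin d → ℤ)) (m : Multiplicative ℤ)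
    (v : Multiplicative (Fin d → ℤ)) :
    (sdAct d φ m v).toAdd = (rhoHom d φ m).mulVec v.toAdd := by
  have h1 : sdAct d φ m = autHom d (φ ^ m.toAdd) := by
    rw [map_zpow]; rfl
  rw [h1]
  have h2 : rhoHom d φ m =
      LinearMap.toMatrix' ((φ ^ m.toAdd : (Fin d → ℤ) ≃ₗ[ℤ] (Fin d → ℤ)) :
        (Fin d → ℤ) →ₗ[ℤ] (Fin d → ℤ)) := rfl
  rw [h2, LinearMap.toMatrix'_mulVec]
  rfl

def affHom (d : ℕ) (φ : (Fin d → ℤ) ≃ₗ[ℤ] (Fin d → ℤ)) :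
    MapTorus d φ →* Matrix (Fin d ⊕ Unit) (Fin d ⊕ Unit) ℤ where
  toFun g := Matrix.fromBlocks (rhoHom d φ g.right) (Matrix.of fun i _ => g.left.toAdd i) 0 1
  map_one' := by
    rw [← Matrix.fromBlocks_one]
    congr 1
    simp
  map_mul' g h := by
    rw [Matrix.fromBlocks_multiply]
    congr 1
    · simp
    · ext i j
      have := congrFun (sdAct_eq d φ g.right h.left) i
      simp [Matrix.mul_apply, this, Matrix.mulVec, dotProduct, add_comm]
    · simp
    · simp

def redHom (n : Type) [Fintype n] [DecidableEq n] (q : ℕ) :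
    Matrix n n ℤ →+* Matrix n n (ZMod q) := (Int.castRingHom (ZMod q)).mapMatrix

lemma red_eq_one {n : Type} [Fintype n] [DecidableEq n] (q : ℕ) (X : Matrix n n ℤ)
    (h : redHom n q X = 1) : ∃ Z, X = 1 + (q : Matrix n n ℤ) * Z := by
  have : ∀ i j, ∃ z : ℤ, X i j - (1 : Matrix n n ℤ) i j = q * z := by
    intro i j
    have h1 : redHom n q (X - 1) = 0 := by rw [map_sub, h, map_one, sub_self]
    have h2 := congrFun (congrFun h1 i) j
    simp only [redHom, RingHom.mapMatrix_apply, Matrix.map_apply, Matrix.zero_apply,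
      eq_intCast] at h2
    exact (ZMod.intCast_zmod_eq_zero_iff_dvd _ _).1 h2
  choose z hz using this
  refine ⟨Matrix.of z, ?_⟩
  rw [← nsmul_eq_mul]
  ext i j
  have := hz i j
  rw [Matrix.add_apply, Matrix.smul_apply, Matrix.of_apply, nsmul_eq_mul]
  linarith

lemma red_pow {n : Type} [Fintype n] [DecidableEq n] (p a : ℕ) (X : Matrix n n ℤ)
    (h : redHom n p X = 1) : redHom n (p ^ (a+1)) (X ^ (p ^ a)) = 1 := by
  obtain ⟨Z, rfl⟩ := red_eq_one p X h
  obtain ⟨W, hW⟩ := aux_pow p a Z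
  rw [hW, map_add, map_one, map_mul, map_natCast]
  have : ((p ^ (a+1) : ℕ) : Matrix n n (ZMod (p ^ (a+1)))) = 0 := by
    rw [← map_natCast (algebraMap (ZMod (p ^ (a+1))) _), ZMod.natCast_self, map_zero]
  rw [this]; simp

lemma unip_pow {d : ℕ} {R : Type*} [CommRing R] (B : Matrix (Fin d) Unit R) (n : ℕ) :
    (Matrix.fromBlocks 1 B 0 1) ^ n =
      (Matrix.fromBlocks 1 (n • B) 0 1 : Matrix (Fin d ⊕ Unit) (Fin d ⊕ Unit) R) := by
  induction n with
  | zero => simp [Matrix.fromBlocks_one]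
  | succ n ih =>
    rw [pow_succ, ih, Matrix.fromBlocks_multiply]
    congr 1 <;> simp [add_smul, add_comm]

lemma exists_not_dvd (p : ℕ) (hp : p.Prime) (z : ℤ) (hz : z ≠ 0) :
    ∃ a : ℕ, ((z : ℤ) : ZMod (p ^ (a+1))) ≠ 0 := by
  refine ⟨z.natAbs, fun h => ?_⟩
  rw [ZMod.intCast_zmod_eq_zero_iff_dvd, Int.natCast_dvd] at h
  have h1 := Nat.le_of_dvd (Int.natAbs_pos.2 hz) h
  have h2 := Nat.lt_pow_self (n := z.natAbs + 1) hp.one_lt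
  omega

theorem residually_p_by_finite_cyclic (d : ℕ) (φ : (Fin d → ℤ) ≃ₗ[ℤ] (Fin d → ℤ))
    (p : ℕ) (hp : p.Prime) :
    ∃ N : Subgroup (MapTorus d φ), ∃ _ : N.Normal,
      ResiduallyP p N ∧ Finite (MapTorus d φ ⧸ N) ∧ IsCyclic (MapTorus d φ ⧸ N) := by
  haveI : Fact p.Prime := ⟨hp⟩
  let ψ0 : MapTorus d φ →* Matrix (Fin d) (Fin d) (ZMod p) :=
    ((redHom (Fin d) p : _ →* _).comp (rhoHom d φ)).comp SemidirectProduct.rightHom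
  let ψ := ψ0.toHomUnits
  have hψ : ∀ g, g ∈ ψ.ker ↔ redHom (Fin d) p (rhoHom d φ g.right) = 1 := by
    intro g
    rw [MonoidHom.mem_ker, Units.ext_iff]
    rfl
  refine ⟨ψ.ker, inferInstance, ?_, ?_, ?_⟩
  · rintro ⟨g, hg⟩ hne
    by_cases hr : g.right = 1
    · have hl : g.left.toAdd ≠ 0 := by
        intro h
        apply hne
        ext1
        exact SemidirectProduct.ext h hr
      obtain ⟨i, hi⟩ := Function.ne_iff.1 hl
      obtain ⟨a, ha⟩ := exists_not_dvd p hp _ hi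
      let q := p ^ (a+1)
      haveI : NeZero q := ⟨pow_ne_zero _ hp.ne_zero⟩
      let f0 : MapTorus d φ →* Matrix (Fin d ⊕ Unit) (Fin d ⊕ Unit) (ZMod q) :=
        (redHom (Fin d ⊕ Unit) q : _ →* _).comp (affHom d φ)
      let f := f0.toHomUnits.comp ψ.ker.subtype
      refine ⟨f.range, inferInstance, inferInstance, f.rangeRestrict, ?_, ?_⟩
      · rintro ⟨_, ⟨⟨h, hh⟩, rfl⟩⟩
        refine ⟨a + 1, ?_⟩
        ext1
        apply Units.ext
        change (redHom (Fin d ⊕ Unit) q (affHom d φ h)) ^ (p ^ (a+1)) = 1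
        rw [pow_succ', pow_mul, ← map_pow, ← map_pow]
        apply red_pow
        rw [map_pow]
        have : redHom (Fin d ⊕ Unit) p (affHom d φ h) = Matrix.fromBlocks 1
            ((Matrix.of fun i _ => h.left.toAdd i : Matrix (Fin d) Unit ℤ).map
              (Int.castRingHom (ZMod p))) 0 1 := by
          rw [← (hψ h).1 hh]
          simp [redHom, affHom, Matrix.fromBlocks_map]
        rw [this, unip_pow, ← Matrix.fromBlocks_one]
        congr 1
        ext
        simp
      · intro h
        have h1 : redHom (Fin d ⊕ Unit) q (affHom d φ g) = 1 :=
          congrArg Units.val (congrArg Subtype.val h)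
        have h2 := congrFun (congrFun h1 (Sum.inl i)) (Sum.inr ())
        apply ha
        simpa [redHom, affHom] using h2
    · have hz : g.right.toAdd ≠ 0 := hr
      obtain ⟨a, ha⟩ := exists_not_dvd p hp _ hz
      haveI : NeZero (p ^ (a+1)) := ⟨pow_ne_zero _ hp.ne_zero⟩
      refine ⟨Multiplicative (ZMod (p ^ (a+1))), inferInstance, inferInstance,
        ((AddMonoidHom.toMultiplicative
          (Int.castAddHom (ZMod (p ^ (a+1))))).comp SemidirectProduct.rightHom).comp
          ψ.ker.subtype, ?_, ?_⟩
      · apply IsPGroup.of_card (n := a+1)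
        simp [Nat.card_eq_fintype_card]
      · exact ha
  · exact Finite.of_equiv _ (QuotientGroup.quotientKerEquivRange ψ).symm.toEquiv
  · refine isCyclic_of_surjective
      ((QuotientGroup.mk' ψ.ker).comp (SemidirectProduct.inr (φ := sdAct d φ))) ?_
    intro x
    obtain ⟨g, rfl⟩ := QuotientGroup.mk'_surjective _ x
    refine ⟨g.right, ?_⟩
    refine QuotientGroup.eq.2 ?_
    rw [hψ]
    simp
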